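/- arXiv:1703.00976 — 10 statements merged into one kernel-verified Lean document; each statement's English description precedes it below -/
import Mathlib

section
/- Assume 0 < λ̄_F < s and let q* = F⁻¹(1 − λ̄_F/s). Then the forward-contract expected profit satisfies Π_F(q) ≤ Π_F(q*) for every q ∈ [d_min, d_max], and the optimal expected profit equals Π_F(q*) = λ_f·μ − s·∫_{q*}^{d_max} x·f(x) dx. -/
open MeasureTheory Set

/-! Buying the volume `q` forward leaves the spot purchase `(x - q)⁺` at demand `x`. For every `q`
this is at least `(x - q) * 1_{x > qstar}`, with equality at `q = qstar`. Once the tail mass beyond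
`qstar` is `lF / s`, the expected cost `lF * q + s * E[(x - q) * 1_{x > qstar}]` of this lower bound
no longer depends on `q`: it is `s * E[x * 1_{x > qstar}]`. So no volume costs less than this, and
`qstar` attains it. The argument sees only the law of the demand, not its density. -/

section GeneralDemand

variable {D : Measure ℝ} [IsFiniteMeasure D]

theorem setIntegral_sub_const_eq (hD : Integrable (fun x => x) D) (A : Set ℝ) (q : ℝ) :
    ∫ x in A, (x - q) ∂D = (∫ x in A, x ∂D) - q * D.real A := by
  rw [integral_sub hD.integrableOn (integrable_const q), setIntegral_const, smul_eq_mul, mul_comm]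

theorem setIntegral_sub_const_le_setIntegral_Ioi (hD : Integrable (fun x => x) D) {A : Set ℝ}
    (hA : MeasurableSet A) (q : ℝ) :
    ∫ x in A, (x - q) ∂D ≤ ∫ x in Ioi q, (x - q) ∂D :=
  calc ∫ x in A, (x - q) ∂D
    _ ≤ ∫ x in {x | 0 ≤ x - q}, (x - q) ∂D :=
      setIntegral_le_nonneg hA (by fun_prop) (hD.sub (integrable_const q))
    _ = ∫ x in Ici q, (x - q) ∂D := by simp only [sub_nonneg, Ici_def]
    _ = ∫ x in Ioi q, (x - q) ∂D :=
      setIntegral_eq_of_subset_of_forall_sdiff_eq_zero measurableSet_Ici Ioi_subset_Ici_self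
        fun x hx => sub_eq_zero.2 (le_antisymm (not_lt.1 hx.2) hx.1)

/-- The expected profit `Π_F(q)` for a demand of law `D`, retail tariff `lf`, forward price `lF` and
expected spot price `s`. The law may have atoms and unbounded support. -/
noncomputable def forwardProfit (D : Measure ℝ) (lf lF s q : ℝ) : ℝ :=
  lf * (∫ x, x ∂D) - lF * q - s * ∫ x in Ioi q, (x - q) ∂D

theorem forwardProfit_le (hD : Integrable (fun x => x) D) {s : ℝ} (hs : 0 ≤ s) (lf p q : ℝ) :
    forwardProfit D lf (s * D.real (Ioi p)) s q ≤
      lf * (∫ x, x ∂D) - s * ∫ x in Ioi p, x ∂D := by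
  have spot_le := setIntegral_sub_const_le_setIntegral_Ioi hD (measurableSet_Ioi (a := p)) q
  rw [setIntegral_sub_const_eq hD] at spot_le
  unfold forwardProfit
  linear_combination s * spot_le

theorem forwardProfit_self (hD : Integrable (fun x => x) D) (lf s p : ℝ) :
    forwardProfit D lf (s * D.real (Ioi p)) s p =
      lf * (∫ x, x ∂D) - s * ∫ x in Ioi p, x ∂D := by
  rw [forwardProfit, setIntegral_sub_const_eq hD]
  ring

theorem optimal_forward_contract_general (hD : Integrable (fun x => x) D) {lF s qstar : ℝ}
    (hs : 0 ≤ s) (hqstar : s * D.real (Ioi qstar) = lF) (lf : ℝ) :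
    (∀ q, forwardProfit D lf lF s q ≤ forwardProfit D lf lF s qstar) ∧
      forwardProfit D lf lF s qstar = lf * (∫ x, x ∂D) - s * ∫ x in Ioi qstar, x ∂D := by
  subst hqstar
  have value := forwardProfit_self hD lf s qstar
  exact ⟨fun q => (forwardProfit_le hD hs lf qstar q).trans_eq value.symm, value⟩

end GeneralDemand

/-- The law on `ℝ` with Lebesgue density `f` on the interval from `a` to `b`. The open interval is
used so that nothing need be known about `f` at the endpoints. -/
noncomputable def densityLaw (f : ℝ → ℝ) (a b : ℝ) : Measure ℝ :=
  (volume.restrict (Ioo a b)).withDensity fun x => ENNReal.ofReal (f x)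

namespace densityLaw

variable {f : ℝ → ℝ} {a b q : ℝ}

theorem isFiniteMeasure (hfi : IntegrableOn f (Ioo a b)) : IsFiniteMeasure (densityLaw f a b) :=
  isFiniteMeasure_withDensity_ofReal hfi.hasFiniteIntegral

theorem integrable_fun_id (hfi : IntegrableOn f (Ioo a b)) :
    Integrable (fun x => x) (densityLaw f a b) := by
  have := isFiniteMeasure hfi
  have mem_Ioo : ∀ᵐ x ∂densityLaw f a b, x ∈ Ioo a b :=
    (withDensity_absolutelyContinuous _ _).ae_le (ae_restrict_mem measurableSet_Ioo)
  exact .of_mem_Icc a b aemeasurable_id' (mem_Ioo.mono fun _ hx => Ioo_subset_Icc_self hx)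

theorem restrict_Ioi (f : ℝ → ℝ) (b : ℝ) (haq : a ≤ q) :
    (densityLaw f a b).restrict (Ioi q) = densityLaw f q b := by
  rw [densityLaw, restrict_withDensity measurableSet_Ioi, Measure.restrict_restrict
    measurableSet_Ioi, inter_comm, Ioo_inter_Ioi, sup_eq_right.2 haq, densityLaw]

theorem integral_eq (hfm : AEMeasurable f (volume.restrict (Ioo a b)))
    (hf : ∀ x ∈ Ioo a b, 0 ≤ f x) (hab : a ≤ b) (g : ℝ → ℝ) :
    ∫ x, g x ∂densityLaw f a b = ∫ x in a..b, g x * f x := by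
  rw [densityLaw, integral_withDensity_eq_integral_toReal_smul₀ hfm.ennreal_ofReal
    (.of_forall fun _ => ENNReal.ofReal_lt_top), intervalIntegral.integral_of_le hab,
    integral_Ioc_eq_integral_Ioo]
  refine setIntegral_congr_fun measurableSet_Ioo fun x hx => ?_
  simp only [ENNReal.toReal_ofReal (hf x hx), smul_eq_mul, mul_comm]

theorem setIntegral_Ioi_eq (hfm : AEMeasurable f (volume.restrict (Ioo a b)))
    (hf : ∀ x ∈ Ioo a b, 0 ≤ f x) (hq : q ∈ Icc a b) (g : ℝ → ℝ) :
    ∫ x in Ioi q, g x ∂densityLaw f a b = ∫ x in q..b, g x * f x := by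
  have hsub : Ioo q b ⊆ Ioo a b := Ioo_subset_Ioo_left hq.1
  rw [restrict_Ioi f b hq.1, integral_eq (hfm.mono_set hsub) (fun x hx => hf x (hsub hx)) hq.2]

theorem real_Ioi_eq_sub (hfi : IntegrableOn f (Ioo a b)) (hf : ∀ x ∈ Ioo a b, 0 ≤ f x)
    (hq : q ∈ Icc a b) :
    (densityLaw f a b).real (Ioi q) = (∫ x in a..b, f x) - ∫ x in a..q, f x := by
  have hi : ∀ c ∈ Icc a b, IntervalIntegrable f volume a c := fun c hc =>
    (intervalIntegrable_iff_integrableOn_Ioo_of_le hc.1).2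
      (hfi.mono_set (Ioo_subset_Ioo_right hc.2))
  rw [intervalIntegral.integral_interval_sub_left
    (hi b (right_mem_Icc.2 (hq.1.trans hq.2))) (hi q hq)]
  simpa using setIntegral_Ioi_eq hfi.aemeasurable hf hq fun _ => 1

theorem forwardProfit_eq (hfm : AEMeasurable f (volume.restrict (Ioo a b)))
    (hf : ∀ x ∈ Ioo a b, 0 ≤ f x) (hq : q ∈ Icc a b) (lf lF s : ℝ) :
    forwardProfit (densityLaw f a b) lf lF s q =
      lf * (∫ x in a..b, x * f x) - lF * q - s * ∫ x in q..b, (x - q) * f x := by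
  rw [forwardProfit, integral_eq hfm hf (hq.1.trans hq.2), setIntegral_Ioi_eq hfm hf hq]

end densityLaw

/-- Optimal forward contract (Theorem 1). -/
theorem optimal_forward_contract
    (f F Finv : ℝ → ℝ) (dmin dmax μ s lf lF : ℝ)
    (hdmin : 0 ≤ dmin) (hdd : dmin < dmax)
    (hf_cont : Continuous f)
    (hf_supp : ∀ x, x < dmin ∨ dmax < x → f x = 0)
    (hf_pos : ∀ x ∈ Set.Ioo dmin dmax, 0 < f x)
    (hf_int : (∫ x in dmin..dmax, f x) = 1)
    (hF : ∀ x, F x = ∫ t in dmin..x, f t)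
    (hFinv : ∀ a ∈ Set.Icc (0:ℝ) 1, Finv a ∈ Set.Icc dmin dmax ∧ F (Finv a) = a)
    (hμ : μ = ∫ x in dmin..dmax, x * f x)
    (hs : 0 < s) (hlf : 0 ≤ lf)
    (hlF_pos : 0 < lF) (hlF_lt : lF < s)
    (PiF : ℝ → ℝ)
    (hPiF : ∀ q, PiF q = lf * μ - lF * q - s * ∫ x in q..dmax, (x - q) * f x)
    (qstar : ℝ) (hqstar : qstar = Finv (1 - lF / s)) :
    (∀ q ∈ Set.Icc dmin dmax, PiF q ≤ PiF qstar) ∧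
      PiF qstar = lf * μ - s * ∫ x in qstar..dmax, x * f x := by
  have hfi : IntegrableOn f (Ioo dmin dmax) := hf_cont.integrableOn_Icc.mono_set Ioo_subset_Icc_self
  have hf_nonneg : ∀ x ∈ Ioo dmin dmax, 0 ≤ f x := fun x hx => (hf_pos x hx).le
  have level_mem : 1 - lF / s ∈ Icc (0 : ℝ) 1 :=
    ⟨sub_nonneg.2 ((div_le_one hs).2 hlF_lt.le), sub_le_self 1 (div_nonneg hlF_pos.le hs.le)⟩
  obtain ⟨qstar_mem, F_qstar⟩ := hqstar ▸ hFinv _ level_mem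
  have tail_mass : s * (densityLaw f dmin dmax).real (Ioi qstar) = lF := by
    rw [densityLaw.real_Ioi_eq_sub hfi hf_nonneg qstar_mem, hf_int, ← hF, F_qstar, sub_sub_cancel,
      mul_div_cancel₀ lF hs.ne']
  have profit_eq : ∀ q ∈ Icc dmin dmax, PiF q = forwardProfit (densityLaw f dmin dmax) lf lF s q :=
    fun q hq => by rw [hPiF, hμ, densityLaw.forwardProfit_eq hfi.aemeasurable hf_nonneg hq]
  have := densityLaw.isFiniteMeasure hfi
  obtain ⟨optimal, value⟩ :=
    optimal_forward_contract_general (densityLaw.integrable_fun_id hfi) hs.le tail_mass lf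
  rw [densityLaw.integral_eq hfi.aemeasurable hf_nonneg hdd.le,
    densityLaw.setIntegral_Ioi_eq hfi.aemeasurable hf_nonneg qstar_mem, ← hμ] at value
  rw [profit_eq qstar qstar_mem]
  exact ⟨fun q hq => (profit_eq q hq).trans_le (optimal q), value⟩
end

section
/- Assume 0 < λ̄_C < s and 0 < P < s − K, and let q* = F⁻¹(1 − P/(s − K)). Then the call-option expected profit satisfies Π_C(q) ≤ Π_C(q*) for every q ∈ [d_min, d_max], and the optimal expected profit equals Π_C(q*) = (λ_f − K)·μ − (s − K)·∫_{q*}^{d_max} x·f(x) dx. -/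
open MeasureTheory Set

/-!
Let `S q = ∫_q^{dmax} (x - q) f(x) dx` be the expected demand in excess of `q`. The expected number
of exercised units is `μ - S q`, so the profit is `PiC q = (lf - K) μ - P q - (s - K) S q`. Since
`S` is convex, with slope `-(1 - F r)` at `r`, and `K < s`, this is concave, and a volume `r` at
which the marginal saving `(s - K) (1 - F r)` equals the premium `P` is optimal; there the terms
in `P` cancel.
-/

section ExpectedExcess

variable {f : ℝ → ℝ} {a b q r : ℝ}

lemma intervalIntegral_id_sub_const_mul (hf : IntervalIntegrable f volume a b) (q : ℝ) :
    ∫ x in a..b, (x - q) * f x = (∫ x in a..b, x * f x) - q * ∫ x in a..b, f x := by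
  simp only [sub_mul]
  rw [intervalIntegral.integral_sub (hf.continuousOn_mul (continuousOn_id' _)) (hf.const_mul q),
    intervalIntegral.integral_const_mul]

-- For `r < q` both the integrand and the orientation of the integral change sign.
lemma intervalIntegral_id_sub_left_mul_nonneg (hf : IntervalIntegrable f volume q r)
    (hf_nonneg : ∀ x ∈ uIoo q r, 0 ≤ f x) : 0 ≤ ∫ x in q..r, (x - q) * f x := by
  have hint : IntervalIntegrable (fun x => (x - q) * f x) volume q r :=
    hf.continuousOn_mul (by fun_prop)
  rcases le_total q r with hqr | hrq
  · rw [uIoo_of_le hqr] at hf_nonneg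
    simpa only [intervalIntegral.integral_zero] using
      intervalIntegral.integral_mono_on_of_le_Ioo hqr intervalIntegrable_const hint
        fun x hx => mul_nonneg (sub_nonneg.2 hx.1.le) (hf_nonneg x hx)
  · rw [uIoo_of_ge hrq] at hf_nonneg
    rw [intervalIntegral.integral_symm, neg_nonneg]
    simpa only [intervalIntegral.integral_zero] using
      intervalIntegral.integral_mono_on_of_le_Ioo hrq hint.symm intervalIntegrable_const
        fun x hx => mul_nonpos_of_nonpos_of_nonneg (sub_nonpos.2 hx.2.le) (hf_nonneg x hx)

/-- The expected excess `E[(X - q)⁺]` over a volume `q` of a demand `X` with density `f` and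
upper endpoint `b`. It is an oriented integral, so it has this meaning only for `q ≤ b`. -/
noncomputable def expectedExcess (f : ℝ → ℝ) (b q : ℝ) : ℝ := ∫ x in q..b, (x - q) * f x

-- `E[min(X, q)] = E[X] - E[(X - q)⁺]`
lemma integral_mul_add_mul_tail_eq_sub_expectedExcess (haq : IntervalIntegrable f volume a q)
    (hqb : IntervalIntegrable f volume q b) :
    (∫ x in a..q, x * f x) + q * ∫ x in q..b, f x
      = (∫ x in a..b, x * f x) - expectedExcess f b q := by
  rw [expectedExcess, intervalIntegral_id_sub_const_mul hqb,
    ← intervalIntegral.integral_add_adjacent_intervals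
      (haq.continuousOn_mul (continuousOn_id' _)) (hqb.continuousOn_mul (continuousOn_id' _))]
  ring

lemma expectedExcess_sub (hqr : IntervalIntegrable f volume q r)
    (hrb : IntervalIntegrable f volume r b) :
    expectedExcess f b q - expectedExcess f b r
      = (∫ x in q..r, (x - q) * f x) + (r - q) * ∫ x in r..b, f x := by
  have hsplit := intervalIntegral.integral_add_adjacent_intervals
    (hqr.continuousOn_mul (g := (· - q)) (by fun_prop))
    (hrb.continuousOn_mul (g := (· - q)) (by fun_prop))
  rw [expectedExcess, expectedExcess, ← hsplit, intervalIntegral_id_sub_const_mul hrb,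
    intervalIntegral_id_sub_const_mul hrb]
  ring

lemma expectedExcess_tangent_le (hqr : IntervalIntegrable f volume q r)
    (hrb : IntervalIntegrable f volume r b) (hf_nonneg : ∀ x ∈ uIoo q r, 0 ≤ f x) :
    expectedExcess f b r + (r - q) * ∫ x in r..b, f x ≤ expectedExcess f b q := by
  linarith [expectedExcess_sub hqr hrb, intervalIntegral_id_sub_left_mul_nonneg hqr hf_nonneg]

end ExpectedExcess

theorem optimal_call_option_general {f F PiC : ℝ → ℝ} {dmin dmax μ s lf P K qstar : ℝ}
    (hf_nonneg : ∀ x ∈ Ioo dmin dmax, 0 ≤ f x)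
    (hf_int : (∫ x in dmin..dmax, f x) = 1)
    (hF : ∀ x, F x = ∫ t in dmin..x, f t)
    (hμ : μ = ∫ x in dmin..dmax, x * f x)
    (hKs : K < s)
    (hPiC : ∀ q, PiC q = lf * μ - P * q - s * (∫ x in q..dmax, (x - q) * f x)
      - K * ((∫ x in dmin..q, x * f x) + q * (1 - F q)))
    (hqstar : qstar ∈ Icc dmin dmax) (hF_qstar : F qstar = 1 - P / (s - K)) :
    (∀ q ∈ Icc dmin dmax, PiC q ≤ PiC qstar) ∧
      PiC qstar = (lf - K) * μ - (s - K) * ∫ x in qstar..dmax, x * f x := by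
  have hc : 0 < s - K := sub_pos.2 hKs
  have hdd : dmin ≤ dmax := hqstar.1.trans hqstar.2
  have hf : ∀ u ∈ Icc dmin dmax, ∀ v ∈ Icc dmin dmax, IntervalIntegrable f volume u v :=
    fun u hu v hv => (intervalIntegral.intervalIntegrable_of_integral_ne_zero
      (hf_int.trans_ne one_ne_zero)).mono_set
        (uIcc_subset_uIcc (Icc_subset_uIcc hu) (Icc_subset_uIcc hv))
  have htail : ∀ q ∈ Icc dmin dmax, 1 - F q = ∫ x in q..dmax, f x := fun q hq => by
    rw [hF, ← hf_int, sub_eq_iff_eq_add', intervalIntegral.integral_add_adjacent_intervals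
      (hf _ (left_mem_Icc.2 hdd) _ hq) (hf _ hq _ (right_mem_Icc.2 hdd))]
  have hprofit : ∀ q ∈ Icc dmin dmax,
      PiC q = (lf - K) * μ - P * q - (s - K) * expectedExcess f dmax q := fun q hq => by
    rw [hPiC, htail q hq, integral_mul_add_mul_tail_eq_sub_expectedExcess
      (hf _ (left_mem_Icc.2 hdd) _ hq) (hf _ hq _ (right_mem_Icc.2 hdd)), ← hμ, expectedExcess]
    ring
  have hpremium : P = (s - K) * ∫ x in qstar..dmax, f x := by
    rw [← htail qstar hqstar, hF_qstar, sub_sub_cancel, mul_div_cancel₀ _ hc.ne']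
  have hqstar_tail := hf _ hqstar _ (right_mem_Icc.2 hdd)
  refine ⟨fun q hq => ?_, ?_⟩
  · have htangent := expectedExcess_tangent_le (hf q hq qstar hqstar) hqstar_tail
      fun x hx => hf_nonneg x ⟨(le_inf hq.1 hqstar.1).trans_lt hx.1,
        hx.2.trans_le (sup_le hq.2 hqstar.2)⟩
    rw [hprofit q hq, hprofit qstar hqstar, hpremium]
    linarith [mul_le_mul_of_nonneg_left htangent hc.le]
  · rw [hprofit qstar hqstar, expectedExcess,
      intervalIntegral_id_sub_const_mul hqstar_tail, hpremium]
    ring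

/-- Optimal call option (Theorem 2). -/
theorem optimal_call_option
    (f F Finv G : ℝ → ℝ) (dmin dmax μ s lf lC P K : ℝ)
    (hdmin : 0 ≤ dmin) (hdd : dmin < dmax)
    (hf_cont : Continuous f)
    (hf_supp : ∀ x, x < dmin ∨ dmax < x → f x = 0)
    (hf_pos : ∀ x ∈ Set.Ioo dmin dmax, 0 < f x)
    (hf_int : (∫ x in dmin..dmax, f x) = 1)
    (hF : ∀ x, F x = ∫ t in dmin..x, f t)
    (hFinv : ∀ a ∈ Set.Icc (0:ℝ) 1, Finv a ∈ Set.Icc dmin dmax ∧ F (Finv a) = a)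
    (hμ : μ = ∫ x in dmin..dmax, x * f x)
    (hs : 0 < s) (hlf : 0 ≤ lf)
    (hG_range : ∀ y, 0 ≤ y → G y ∈ Set.Icc (0:ℝ) 1)
    (hG_mono : MonotoneOn G (Set.Ici 0))
    (hG_zero : G 0 = 0)
    (hK : K = lC - ∫ y in (0:ℝ)..lC, G y)
    (hlC_pos : 0 < lC) (hlC_lt : lC < s)
    (hP_pos : 0 < P) (hP_lt : P < s - K)
    (PiC : ℝ → ℝ)
    (hPiC : ∀ q, PiC q = lf * μ - P * q - s * (∫ x in q..dmax, (x - q) * f x)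
      - K * ((∫ x in dmin..q, x * f x) + q * (1 - F q)))
    (qstar : ℝ) (hqstar : qstar = Finv (1 - P / (s - K))) :
    (∀ q ∈ Set.Icc dmin dmax, PiC q ≤ PiC qstar) ∧
      PiC qstar = (lf - K) * μ - (s - K) * ∫ x in qstar..dmax, x * f x := by
  subst hqstar
  have hc : 0 ≤ s - K := (hP_pos.trans hP_lt).le
  obtain ⟨hmem, hF_qstar⟩ := hFinv _ <|
    Icc.one_sub_mem (unitInterval.div_mem hP_pos.le hc hP_lt.le)
  exact optimal_call_option_general (fun x hx => (hf_pos x hx).le) hf_int hF hμ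
    (sub_pos.1 (hP_pos.trans hP_lt)) hPiC hmem hF_qstar
end

section
/- Assume 0 < λ̄_C < s and P > 0. Then 0 ≤ K ≤ λ̄_C < s, the function Π_C is differentiable on (d_min, d_max) with Π_C′(q) = −P + (s − K)·(1 − F(q)) and twice differentiable with Π_C″(q) = −(s − K)·f(q) < 0 for every q ∈ (d_min, d_max); consequently Π_C is strictly concave on [d_min, d_max]. -/
open MeasureTheory Set

/-!
Since `(x - q)⁺ = x - min x q`, the spot purchases beyond `q` cost `s` times the mean demand less
the expected sales `S q = E[min D q]`, and the option is exercised for `S q` units in expectation.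
Hence the profit is `(lf - s) * μ - P * q + (s - K) * S q`. As `q` grows, `min D q` grows exactly
on the event `D > q`, so `S' = 1 - F` and `S'' = -f`. Finally `0 ≤ G ≤ 1` on `[0, lC]` gives
`0 ≤ K ≤ lC < s`.
-/

theorem intervalIntegral_mem_Icc_of_forall_mem_Icc {g : ℝ → ℝ} {a b m M : ℝ} (hab : a ≤ b)
    (hg : IntervalIntegrable g volume a b) (h : ∀ x ∈ Icc a b, g x ∈ Icc m M) :
    (∫ x in a..b, g x) ∈ Icc (m * (b - a)) (M * (b - a)) := by
  have hconst (c : ℝ) : ∫ _ in a..b, c = c * (b - a) := by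
    rw [intervalIntegral.integral_const, smul_eq_mul, mul_comm]
  rw [← hconst m, ← hconst M]
  exact ⟨intervalIntegral.integral_mono_on hab intervalIntegrable_const hg fun x hx => (h x hx).1,
    intervalIntegral.integral_mono_on hab hg intervalIntegrable_const fun x hx => (h x hx).2⟩

theorem sub_integral_mem_Icc {G : ℝ → ℝ} {c : ℝ} (hc : 0 ≤ c)
    (hG : IntervalIntegrable G volume 0 c) (hG01 : ∀ y ∈ Icc 0 c, G y ∈ Icc (0 : ℝ) 1) :
    c - (∫ y in (0 : ℝ)..c, G y) ∈ Icc 0 c := by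
  obtain ⟨hlower, hupper⟩ := intervalIntegral_mem_Icc_of_forall_mem_Icc hc hG hG01
  constructor <;> linarith

theorem strictConcaveOn_of_hasDerivAt2_neg {D : Set ℝ} (hD : Convex ℝ D) {g g' g'' : ℝ → ℝ}
    (hg : ContinuousOn g D) (hg' : ∀ x ∈ interior D, HasDerivAt g (g' x) x)
    (hg'' : ∀ x ∈ interior D, HasDerivAt g' (g'' x) x) (hneg : ∀ x ∈ interior D, g'' x < 0) :
    StrictConcaveOn ℝ D g := by
  refine strictConcaveOn_of_deriv2_neg hD hg fun x hx => ?_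
  have hderiv : deriv g =ᶠ[nhds x] g' := by
    filter_upwards [isOpen_interior.mem_nhds hx] with y hy using (hg' y hy).deriv
  change deriv (deriv g) x < 0
  rw [hderiv.deriv_eq, (hg'' x hx).deriv]
  exact hneg x hx

theorem strictConcaveOn_affine_add_const_mul {D : Set ℝ} {g : ℝ → ℝ} {k : ℝ}
    (hg : StrictConcaveOn ℝ D g) (hk : 0 < k) (c m : ℝ) :
    StrictConcaveOn ℝ D (fun x => c - m * x + k * g x) := by
  refine ⟨hg.1, fun x hx y hy hxy α β hα hβ hαβ => ?_⟩
  have hstrict := mul_lt_mul_of_pos_left (hg.2 hx hy hxy hα hβ hαβ) hk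
  obtain rfl : β = 1 - α := by linarith
  simp only [smul_eq_mul] at hstrict ⊢
  linarith

/-- The expected sales `E[min D q]` of a stock `q` under a demand `D` with density `f` on
`[a, b]`, which is also the expected number of units for which an option of volume `q` is
exercised. -/
noncomputable def expectedSales (f : ℝ → ℝ) (a b q : ℝ) : ℝ :=
  ∫ x in a..b, min x q * f x

section

variable {f : ℝ → ℝ} {a b q : ℝ}

theorem intervalIntegrable_left_right (hf : IntervalIntegrable f volume a b) (hq : q ∈ Icc a b) :
    IntervalIntegrable f volume a q ∧ IntervalIntegrable f volume q b := by
  rw [← uIcc_of_le (hq.1.trans hq.2)] at hq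
  exact ⟨hf.mono_set (uIcc_subset_uIcc_left hq), hf.mono_set (uIcc_subset_uIcc_right hq)⟩

theorem expectedSales_eq_integral_add_mul_integral (hf : IntervalIntegrable f volume a b)
    (hq : q ∈ Icc a b) :
    expectedSales f a b q = (∫ x in a..q, x * f x) + q * ∫ x in q..b, f x := by
  have hmin : IntervalIntegrable (fun x => min x q * f x) volume a b :=
    hf.continuousOn_mul (by fun_prop)
  obtain ⟨hleft, hright⟩ := intervalIntegrable_left_right hmin hq
  rw [expectedSales, ← intervalIntegral.integral_add_adjacent_intervals hleft hright,
    ← intervalIntegral.integral_const_mul]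
  congr 1
  · refine intervalIntegral.integral_congr_Ioo_of_le hq.1 fun x hx => ?_
    simp only [min_eq_left hx.2.le]
  · refine intervalIntegral.integral_congr_Ioo_of_le hq.2 fun x hx => ?_
    simp only [min_eq_right hx.1.le]

theorem integral_sub_mul_eq_sub_expectedSales (hf : IntervalIntegrable f volume a b)
    (hq : q ∈ Icc a b) :
    ∫ x in q..b, (x - q) * f x = (∫ x in a..b, x * f x) - expectedSales f a b q := by
  have hxf : IntervalIntegrable (fun x => x * f x) volume a b :=
    hf.continuousOn_mul continuousOn_id
  obtain ⟨hxf_left, hxf_right⟩ := intervalIntegrable_left_right hxf hq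
  have hf_right := (intervalIntegrable_left_right hf hq).2
  calc ∫ x in q..b, (x - q) * f x
      = (∫ x in q..b, x * f x) - q * ∫ x in q..b, f x := by
        simp only [sub_mul]
        rw [intervalIntegral.integral_sub hxf_right (hf_right.const_mul q),
          intervalIntegral.integral_const_mul]
    _ = (∫ x in a..b, x * f x) - expectedSales f a b q := by
        rw [expectedSales_eq_integral_add_mul_integral hf hq,
          ← intervalIntegral.integral_add_adjacent_intervals hxf_left hxf_right]
        ring

theorem continuousOn_expectedSales (hab : a ≤ b) (hf : IntervalIntegrable f volume a b) :
    ContinuousOn (expectedSales f a b) (Icc a b) := by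
  have hxf : IntervalIntegrable (fun x => x * f x) volume a b :=
    hf.continuousOn_mul continuousOn_id
  have hmoment : ContinuousOn (fun q => ∫ x in a..q, x * f x) (Icc a b) :=
    uIcc_of_le hab ▸ intervalIntegral.continuousOn_primitive_interval' hxf left_mem_uIcc
  have htail : ContinuousOn (fun q => ∫ x in q..b, f x) (Icc a b) := by
    simp only [intervalIntegral.integral_symm b]
    exact (uIcc_of_le hab ▸
      intervalIntegral.continuousOn_primitive_interval' hf right_mem_uIcc).neg
  exact (hmoment.add (continuousOn_id.mul htail)).congr fun q hq =>
    expectedSales_eq_integral_add_mul_integral hf hq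

theorem hasDerivAt_integral_right_of_mem_Ioo (hf : IntervalIntegrable f volume a b)
    (hq : q ∈ Ioo a b) (hfq : ContinuousAt f q) :
    HasDerivAt (fun u => ∫ x in a..u, f x) (f q) q :=
  intervalIntegral.integral_hasDerivAt_right
    (intervalIntegrable_left_right hf (Ioo_subset_Icc_self hq)).1
    ⟨Ioc a b, Ioc_mem_nhds hq.1 hq.2, hf.1.aestronglyMeasurable⟩ hfq

theorem hasDerivAt_integral_left_of_mem_Ioo (hf : IntervalIntegrable f volume a b)
    (hq : q ∈ Ioo a b) (hfq : ContinuousAt f q) :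
    HasDerivAt (fun u => ∫ x in u..b, f x) (-f q) q :=
  intervalIntegral.integral_hasDerivAt_left
    (intervalIntegrable_left_right hf (Ioo_subset_Icc_self hq)).2
    ⟨Ioc a b, Ioc_mem_nhds hq.1 hq.2, hf.1.aestronglyMeasurable⟩ hfq

theorem hasDerivAt_expectedSales (hf : IntervalIntegrable f volume a b)
    (hq : q ∈ Ioo a b) (hfq : ContinuousAt f q) :
    HasDerivAt (expectedSales f a b) (∫ x in q..b, f x) q := by
  have hmoment : HasDerivAt (fun u => ∫ x in a..u, x * f x) (q * f q) q :=
    hasDerivAt_integral_right_of_mem_Ioo (hf.continuousOn_mul continuousOn_id) hq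
      (continuousAt_id.mul hfq)
  have htail := hasDerivAt_integral_left_of_mem_Ioo hf hq hfq
  have hsplit : expectedSales f a b =ᶠ[nhds q]
      fun u => (∫ x in a..u, x * f x) + u * ∫ x in u..b, f x := by
    filter_upwards [Icc_mem_nhds hq.1 hq.2] with u hu
      using expectedSales_eq_integral_add_mul_integral hf hu
  refine ((hmoment.add ((hasDerivAt_id q).mul htail)).congr_of_eventuallyEq hsplit).congr_deriv ?_
  simp only [id]
  ring

theorem strictConcaveOn_expectedSales (hab : a ≤ b) (hf : IntervalIntegrable f volume a b)
    (hf_cont : ContinuousOn f (Ioo a b)) (hf_pos : ∀ x ∈ Ioo a b, 0 < f x) :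
    StrictConcaveOn ℝ (Icc a b) (expectedSales f a b) := by
  have hfq (q) (hq : q ∈ Ioo a b) : ContinuousAt f q :=
    hf_cont.continuousAt (isOpen_Ioo.mem_nhds hq)
  have hderiv (q) (hq : q ∈ Ioo a b) := hasDerivAt_expectedSales hf hq (hfq q hq)
  have hderiv2 (q) (hq : q ∈ Ioo a b) := hasDerivAt_integral_left_of_mem_Ioo hf hq (hfq q hq)
  rw [← interior_Icc] at hderiv hderiv2 hf_pos
  exact strictConcaveOn_of_hasDerivAt2_neg (convex_Icc a b) (continuousOn_expectedSales hab hf)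
    hderiv hderiv2 fun q hq => neg_neg_of_pos (hf_pos q hq)

end

/-- Covers demand densities that jump at the ends of their support, such as the uniform one. -/
theorem call_option_profit_concave_general
    (f F G : ℝ → ℝ) (dmin dmax μ s lf lC P K : ℝ) (hdd : dmin < dmax)
    (hf : IntervalIntegrable f volume dmin dmax)
    (hf_cont : ContinuousOn f (Ioo dmin dmax))
    (hf_pos : ∀ x ∈ Ioo dmin dmax, 0 < f x)
    (hf_int : (∫ x in dmin..dmax, f x) = 1)
    (hF : ∀ x, F x = ∫ t in dmin..x, f t)
    (hμ : μ = ∫ x in dmin..dmax, x * f x)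
    (hG_range : ∀ y ∈ Icc 0 lC, G y ∈ Icc (0 : ℝ) 1)
    (hG_mono : MonotoneOn G (Icc 0 lC))
    (hK : K = lC - ∫ y in (0 : ℝ)..lC, G y)
    (hlC : 0 ≤ lC) (hlC_lt : lC < s)
    (PiC : ℝ → ℝ)
    (hPiC : ∀ q, PiC q = lf * μ - P * q - s * (∫ x in q..dmax, (x - q) * f x)
      - K * ((∫ x in dmin..q, x * f x) + q * (1 - F q))) :
    (0 ≤ K ∧ K ≤ lC ∧ lC < s) ∧
    (∀ q ∈ Ioo dmin dmax, HasDerivAt PiC (-P + (s - K) * (1 - F q)) q) ∧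
    (∀ q ∈ Ioo dmin dmax,
      HasDerivAt (fun q => -P + (s - K) * (1 - F q)) (-((s - K) * f q)) q ∧
      -((s - K) * f q) < 0) ∧
    StrictConcaveOn ℝ (Icc dmin dmax) PiC := by
  rw [← uIcc_of_le hlC] at hG_mono
  obtain ⟨hK_nonneg, hK_le⟩ : K ∈ Icc 0 lC :=
    hK ▸ sub_integral_mem_Icc hlC hG_mono.intervalIntegrable hG_range
  have hsK : 0 < s - K := by linarith
  have hfq (q) (hq : q ∈ Ioo dmin dmax) : ContinuousAt f q :=
    hf_cont.continuousAt (isOpen_Ioo.mem_nhds hq)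
  have htail (q) (hq : q ∈ Icc dmin dmax) : 1 - F q = ∫ x in q..dmax, f x := by
    rw [hF, ← hf_int]
    exact intervalIntegral.integral_interval_sub_left hf (intervalIntegrable_left_right hf hq).1
  have hprofit : EqOn (fun q => (lf - s) * μ - P * q + (s - K) * expectedSales f dmin dmax q)
      PiC (Icc dmin dmax) := fun q hq => by
    simp only [hPiC, htail q hq, ← expectedSales_eq_integral_add_mul_integral hf hq,
      integral_sub_mul_eq_sub_expectedSales hf hq, ← hμ]
    ring
  refine ⟨⟨hK_nonneg, hK_le, hlC_lt⟩, fun q hq => ?_, fun q hq => ⟨?_, ?_⟩, ?_⟩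
  · have hlinear := ((hasDerivAt_id q).const_mul P).const_sub ((lf - s) * μ)
    have hsales := (hasDerivAt_expectedSales hf hq (hfq q hq)).const_mul (s - K)
    rw [htail q (Ioo_subset_Icc_self hq)]
    simpa using (hlinear.add hsales).congr_of_eventuallyEq
      (hprofit.symm.eventuallyEq_of_mem (Icc_mem_nhds hq.1 hq.2))
  · have hcdf := hasDerivAt_integral_right_of_mem_Ioo hf hq (hfq q hq)
    simpa [hF] using ((hcdf.const_sub 1).const_mul (s - K)).const_add (-P)
  · exact neg_neg_of_pos (mul_pos hsK (hf_pos q hq))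
  · exact (strictConcaveOn_affine_add_const_mul
      (strictConcaveOn_expectedSales hdd.le hf hf_cont hf_pos) hsK _ _).congr hprofit

/-- Bounds on K, derivatives and strict concavity of the
call-option expected profit. -/
theorem call_option_profit_concave
    (f F G : ℝ → ℝ) (dmin dmax μ s lf lC P K : ℝ)
    (hdmin : 0 ≤ dmin) (hdd : dmin < dmax)
    (hf_cont : Continuous f)
    (hf_supp : ∀ x, x < dmin ∨ dmax < x → f x = 0)
    (hf_pos : ∀ x ∈ Set.Ioo dmin dmax, 0 < f x)
    (hf_int : (∫ x in dmin..dmax, f x) = 1)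
    (hF : ∀ x, F x = ∫ t in dmin..x, f t)
    (hμ : μ = ∫ x in dmin..dmax, x * f x)
    (hs : 0 < s) (hlf : 0 ≤ lf)
    (hG_range : ∀ y, 0 ≤ y → G y ∈ Set.Icc (0:ℝ) 1)
    (hG_mono : MonotoneOn G (Set.Ici 0))
    (hG_zero : G 0 = 0)
    (hK : K = lC - ∫ y in (0:ℝ)..lC, G y)
    (hlC_pos : 0 < lC) (hlC_lt : lC < s)
    (hP_pos : 0 < P)
    (PiC : ℝ → ℝ)
    (hPiC : ∀ q, PiC q = lf * μ - P * q - s * (∫ x in q..dmax, (x - q) * f x)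
      - K * ((∫ x in dmin..q, x * f x) + q * (1 - F q))) :
    (0 ≤ K ∧ K ≤ lC ∧ lC < s) ∧
    (∀ q ∈ Set.Ioo dmin dmax, HasDerivAt PiC (-P + (s - K) * (1 - F q)) q) ∧
    (∀ q ∈ Set.Ioo dmin dmax,
      HasDerivAt (fun q => -P + (s - K) * (1 - F q)) (-((s - K) * f q)) q ∧
      -((s - K) * f q) < 0) ∧
    StrictConcaveOn ℝ (Set.Icc dmin dmax) PiC := by
  exact call_option_profit_concave_general f F G dmin dmax μ s lf lC P K hdd
    (hf_cont.intervalIntegrable _ _) hf_cont.continuousOn hf_pos hf_int hF hμ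
    (fun y hy => hG_range y hy.1) (hG_mono.mono Icc_subset_Ici_self) hK hlC_pos.le hlC_lt PiC hPiC
end

section
/- Assume s > λ_f and 1/α < s − λ_f, and let r* = F⁻¹(1 − 1/(α·(s − λ_f)))/α. Then the Demand Response expected profit satisfies Π_DR(r) ≤ Π_DR(r*) for every r ≥ 0, and the optimal expected profit equals Π_DR(r*) = (λ_f − s)·∫_{α·r*}^{d_max} x·f(x) dx. -/
open MeasureTheory Set

/-!
For any threshold `c ∈ [0, d]`, the residual demand `∫ x in 0..d, max (x - α * r) 0 * f x` is at
least its tail part `∫ x in c..d, (x - α * r) * f x`, with equality when `c = α * r`. Replacing the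
residual demand by its tail part therefore bounds the profit above by an affine function of `r`.
If `c` is the quantile for which `∫ x in c..d, f x = 1 / (α * (s - lf))`, the demand reduction
`α * r` saves exactly `r` on the tail, which cancels the reward paid: the bound is the constant
`(lf - s) * ∫ x in c..d, x * f x`, attained at `r = c / α`.
-/

section PositivePart

variable {μ : Measure ℝ} {f g : ℝ → ℝ} {a b c : ℝ}

lemma integral_mul_le_integral_max_zero_mul [NullSingletonClass μ]
    (hf : IntervalIntegrable f μ a b) (hf_nonneg : ∀ x ∈ Ioo a b, 0 ≤ f x)
    (hg : ContinuousOn g (Icc a b)) (hc : c ∈ Icc a b) :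
    ∫ x in c..b, g x * f x ∂μ ≤ ∫ x in a..b, max (g x) 0 * f x ∂μ := by
  have hab : a ≤ b := hc.1.trans hc.2
  rw [← uIcc_of_le hab] at hg
  have hcb : uIcc c b ⊆ uIcc a b := uIcc_subset_uIcc_right (Icc_subset_uIcc hc)
  have hmax : IntervalIntegrable (fun x => max (g x) 0 * f x) μ a b :=
    hf.continuousOn_mul (hg.sup continuousOn_const)
  have hmax_nonneg : 0 ≤ᵐ[μ.restrict (Ioc a b)] fun x => max (g x) 0 * f x := by
    rw [← Measure.restrict_congr_set Ioo_ae_eq_Ioc]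
    exact ae_restrict_of_forall_mem measurableSet_Ioo fun x hx =>
      mul_nonneg (le_max_right _ _) (hf_nonneg x hx)
  calc ∫ x in c..b, g x * f x ∂μ
      ≤ ∫ x in c..b, max (g x) 0 * f x ∂μ :=
        intervalIntegral.integral_mono_on_of_le_Ioo hc.2
          ((hf.continuousOn_mul hg).mono_set hcb) (hmax.mono_set hcb) fun x hx =>
            mul_le_mul_of_nonneg_right (le_max_left _ _) (hf_nonneg x ⟨hc.1.trans_lt hx.1, hx.2⟩)
    _ ≤ ∫ x in a..b, max (g x) 0 * f x ∂μ :=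
        intervalIntegral.integral_mono_interval hc.1 hc.2 le_rfl hmax_nonneg hmax

lemma integral_max_zero_mul_eq_integral_mul
    (hf : IntervalIntegrable f μ a b) (hg : ContinuousOn g (Icc a b)) (hc : c ∈ Icc a b)
    (hg_nonpos : ∀ x ∈ Icc a c, g x ≤ 0) (hg_nonneg : ∀ x ∈ Icc c b, 0 ≤ g x) :
    ∫ x in a..b, max (g x) 0 * f x ∂μ = ∫ x in c..b, g x * f x ∂μ := by
  have hc' : c ∈ uIcc a b := Icc_subset_uIcc hc
  rw [← uIcc_of_le (hc.1.trans hc.2)] at hg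
  have hmax : IntervalIntegrable (fun x => max (g x) 0 * f x) μ a b :=
    hf.continuousOn_mul (hg.sup continuousOn_const)
  have hleft : ∫ x in a..c, max (g x) 0 * f x ∂μ = ∫ _ in a..c, (0 : ℝ) ∂μ :=
    intervalIntegral.integral_congr fun x hx => by
      rw [uIcc_of_le hc.1] at hx
      simp only [max_eq_right (hg_nonpos x hx), zero_mul]
  have hright : ∫ x in c..b, max (g x) 0 * f x ∂μ = ∫ x in c..b, g x * f x ∂μ :=
    intervalIntegral.integral_congr fun x hx => by
      rw [uIcc_of_le hc.2] at hx
      simp only [max_eq_left (hg_nonneg x hx)]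
  rw [← intervalIntegral.integral_add_adjacent_intervals
    (hmax.mono_set (uIcc_subset_uIcc_left hc')) (hmax.mono_set (uIcc_subset_uIcc_right hc')),
    hleft, hright, intervalIntegral.integral_zero, zero_add]

lemma integral_sub_const_mul (hf : IntervalIntegrable f μ a b) (y : ℝ) :
    ∫ x in a..b, (x - y) * f x ∂μ = (∫ x in a..b, x * f x ∂μ) - y * ∫ x in a..b, f x ∂μ := by
  simp only [sub_mul]
  rw [intervalIntegral.integral_sub (hf.continuousOn_mul (continuousOn_id' _)) (hf.const_mul y),
    intervalIntegral.integral_const_mul]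

end PositivePart

/-- The expected profit `Π_DR(r)` of Demand Response at reward `r`, for a demand density `f` on
`[0, d]`, expected spot price `s`, retail tariff `lf` and elasticity `α`. -/
noncomputable def demandResponseProfit (f : ℝ → ℝ) (d s lf α r : ℝ) : ℝ :=
  (lf - s) * (∫ x in (0 : ℝ)..d, max (x - α * r) 0 * f x) - r

section DemandResponse

variable {f : ℝ → ℝ} {c d s lf α : ℝ}

lemma mul_integral_sub_mul_sub_eq_of_tail (hf : IntervalIntegrable f volume c d)
    (htail : α * (s - lf) * ∫ x in c..d, f x = 1) (r : ℝ) :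
    (lf - s) * (∫ x in c..d, (x - α * r) * f x) - r = (lf - s) * ∫ x in c..d, x * f x := by
  rw [integral_sub_const_mul hf]
  linear_combination r * htail

lemma demandResponseProfit_le_of_tail (hf : IntervalIntegrable f volume 0 d)
    (hf_nonneg : ∀ x ∈ Ioo 0 d, 0 ≤ f x) (hlf : lf ≤ s) (hc : c ∈ Icc 0 d)
    (htail : α * (s - lf) * ∫ x in c..d, f x = 1) (r : ℝ) :
    demandResponseProfit f d s lf α r ≤ (lf - s) * ∫ x in c..d, x * f x := by
  have hfc : IntervalIntegrable f volume c d :=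
    hf.mono_set (uIcc_subset_uIcc_right (Icc_subset_uIcc hc))
  rw [← mul_integral_sub_mul_sub_eq_of_tail hfc htail r, demandResponseProfit]
  gcongr ?_ - r
  exact mul_le_mul_of_nonpos_left
    (integral_mul_le_integral_max_zero_mul hf hf_nonneg (by fun_prop) hc) (sub_nonpos.2 hlf)

lemma demandResponseProfit_eq_of_tail {r : ℝ} (hf : IntervalIntegrable f volume 0 d)
    (hr : α * r ∈ Icc 0 d) (htail : α * (s - lf) * ∫ x in (α * r)..d, f x = 1) :
    demandResponseProfit f d s lf α r = (lf - s) * ∫ x in (α * r)..d, x * f x := by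
  have hfr : IntervalIntegrable f volume (α * r) d :=
    hf.mono_set (uIcc_subset_uIcc_right (Icc_subset_uIcc hr))
  rw [← mul_integral_sub_mul_sub_eq_of_tail hfr htail r, demandResponseProfit,
    integral_max_zero_mul_eq_integral_mul hf (by fun_prop) hr
      (fun _ hx => sub_nonpos.2 hx.2) (fun _ hx => sub_nonneg.2 hx.1)]

end DemandResponse

theorem optimal_demand_response_general
    {f F Finv : ℝ → ℝ} {dmax s lf α rstar : ℝ}
    (hf : IntervalIntegrable f volume 0 dmax)
    (hf_nonneg : ∀ x ∈ Ioo 0 dmax, 0 ≤ f x)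
    (hf_int : ∫ x in (0 : ℝ)..dmax, f x = 1)
    (hF : ∀ x ∈ Icc 0 dmax, F x = ∫ t in (0 : ℝ)..x, f t)
    (hFinv : ∀ a ∈ Icc (0 : ℝ) 1, Finv a ∈ Icc 0 dmax ∧ F (Finv a) = a)
    (hα : 0 < α) (helast : 1 / α ≤ s - lf)
    (hrstar : rstar = Finv (1 - 1 / (α * (s - lf))) / α) :
    (∀ r, demandResponseProfit f dmax s lf α r ≤ demandResponseProfit f dmax s lf α rstar) ∧
      demandResponseProfit f dmax s lf α rstar =
        (lf - s) * ∫ x in (α * rstar)..dmax, x * f x := by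
  have hspread : 0 < s - lf := (one_div_pos.2 hα).trans_le helast
  have hlevel : 1 - 1 / (α * (s - lf)) ∈ Icc (0 : ℝ) 1 :=
    Icc.one_sub_mem ⟨by positivity, div_le_one_of_le₀ ((div_le_iff₀' hα).1 helast) (by positivity)⟩
  have hquantile : Finv (1 - 1 / (α * (s - lf))) = α * rstar := by
    rw [hrstar, mul_div_cancel₀ _ hα.ne']
  obtain ⟨hmem, hcdf⟩ := hquantile ▸ hFinv _ hlevel
  have htail : α * (s - lf) * ∫ x in (α * rstar)..dmax, f x = 1 := by
    rw [← intervalIntegral.integral_interval_sub_left hf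
      (hf.mono_set (uIcc_subset_uIcc_left (Icc_subset_uIcc hmem))), hf_int, ← hF _ hmem, hcdf]
    field_simp
    ring
  have hopt := demandResponseProfit_eq_of_tail hf hmem htail
  exact ⟨fun r => hopt ▸ demandResponseProfit_le_of_tail hf hf_nonneg (sub_pos.1 hspread).le
    hmem htail r, hopt⟩

/-- Optimal Demand Response reward (Theorem 3, case 1/α < s − λ_f). -/
theorem optimal_demand_response
    (f F Finv : ℝ → ℝ) (dmax μ s lf α : ℝ)
    (hdmax : 0 < dmax)
    (hf_cont : Continuous f)
    (hf_supp : ∀ x, x < 0 ∨ dmax < x → f x = 0)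
    (hf_pos : ∀ x ∈ Set.Ioo 0 dmax, 0 < f x)
    (hf_int : (∫ x in (0:ℝ)..dmax, f x) = 1)
    (hF : ∀ x, F x = ∫ t in (0:ℝ)..x, f t)
    (hFinv : ∀ a ∈ Set.Icc (0:ℝ) 1, Finv a ∈ Set.Icc 0 dmax ∧ F (Finv a) = a)
    (hμ : μ = ∫ x in (0:ℝ)..dmax, x * f x)
    (hs : 0 < s) (hlf : 0 ≤ lf)
    (hα : 0 < α)
    (hspread : s > lf) (helast : 1 / α < s - lf)
    (PiDR : ℝ → ℝ)
    (hPiDR : ∀ r, PiDR r = (lf - s) * (∫ x in (0:ℝ)..dmax, max (x - α * r) 0 * f x) - r)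
    (rstar : ℝ) (hrstar : rstar = Finv (1 - 1 / (α * (s - lf))) / α) :
    (∀ r, 0 ≤ r → PiDR r ≤ PiDR rstar) ∧
      PiDR rstar = (lf - s) * ∫ x in (α * rstar)..dmax, x * f x := by
  obtain rfl : PiDR = demandResponseProfit f dmax s lf α := funext hPiDR
  exact (optimal_demand_response_general (hf_cont.intervalIntegrable 0 dmax)
    (fun x hx => (hf_pos x hx).le) hf_int (fun x _ => hF x) hFinv hα helast.le hrstar).imp_left
    fun h r _ => h r
end

section
/- Assume s > λ_f. The function Π_DR is differentiable on (0, d_max/α) with Π_DR′(r) = α·(s − λ_f)·(1 − F(α·r)) − 1 for every r ∈ (0, d_max/α). -/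
open MeasureTheory Set

/-!
For fixed `x` the excess `max (x - c) 0` is `1`-Lipschitz in `c`, and away from `c = x` its
derivative is `-1` if `c < x` and `0` otherwise. When `c` is not an atom this holds for almost
every `x`, so dominated convergence moves the derivative under the integral, and
`c ↦ ∫ max (x - c) 0 * f x` has derivative minus the tail mass of `f` beyond `c`. The chain rule at
`c = α * r` gives the derivative of the profit.
-/

section ExpectedExcess

variable {E : Type*} [NormedAddCommGroup E] [NormedSpace ℝ E] {μ : Measure ℝ} {f : ℝ → E}
  {a b c x : ℝ}

lemma lipschitzWith_max_sub_smul (x : ℝ) (v : E) :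
    LipschitzWith ‖v‖₊ (fun c : ℝ => max (x - c) 0 • v) := by
  refine LipschitzWith.of_dist_le_mul fun c₁ c₂ => ?_
  have hmax : |max (x - c₁) 0 - max (x - c₂) 0| ≤ |c₁ - c₂| :=
    (abs_max_sub_max_le_abs _ _ _).trans_eq (by rw [sub_sub_sub_cancel_left, abs_sub_comm])
  rw [dist_eq_norm, ← sub_smul, norm_smul, mul_comm, coe_nnnorm, Real.dist_eq]
  gcongr
  exact hmax

lemma hasDerivAt_max_sub_smul (f : ℝ → E) (hx : x ≠ c) :
    HasDerivAt (fun c => max (x - c) 0 • f x) (-(Ioi c).indicator f x) c := by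
  rcases hx.lt_or_gt with hxc | hcx
  · have hzero : (fun y => max (x - y) 0 • f x) =ᶠ[nhds c] fun _ => 0 := by
      filter_upwards [lt_mem_nhds hxc] with y hy
      rw [max_eq_right (sub_nonpos.2 hy.le), zero_smul]
    rw [indicator_of_notMem (notMem_Ioi.2 hxc.le), neg_zero]
    exact (hasDerivAt_const c 0).congr_of_eventuallyEq hzero
  · have hsub : (fun y => max (x - y) 0 • f x) =ᶠ[nhds c] fun y => (x - y) • f x := by
      filter_upwards [gt_mem_nhds hcx] with y hy
      rw [max_eq_left (sub_nonneg.2 hy.le)]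
    rw [indicator_of_mem (mem_Ioi.2 hcx), ← neg_one_smul ℝ (f x)]
    exact (((hasDerivAt_id' c).const_sub x).smul_const (f x)).congr_of_eventuallyEq hsub

theorem hasDerivAt_integral_max_sub_smul (hf : Integrable f μ)
    (hexcess : Integrable (fun x => max (x - c) 0 • f x) μ) (hμc : μ {c} = 0) :
    HasDerivAt (fun c => ∫ x, max (x - c) 0 • f x ∂μ) (-∫ x in Ioi c, f x ∂μ) c := by
  have hmeas (y : ℝ) : AEStronglyMeasurable (fun x => max (x - y) 0 • f x) μ :=
    AEStronglyMeasurable.smul (by fun_prop) hf.aestronglyMeasurable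
  have hlip (x : ℝ) :
      LipschitzOnWith (Real.nnabs ‖f x‖) (fun c => max (x - c) 0 • f x) univ := by
    rw [Real.nnabs_of_nonneg (norm_nonneg _), norm_toNNReal]
    exact (lipschitzWith_max_sub_smul x (f x)).lipschitzOnWith
  have hderiv : ∀ᵐ x ∂μ,
      HasDerivAt (fun c => max (x - c) 0 • f x) (-(Ioi c).indicator f x) c := by
    filter_upwards [compl_mem_ae_iff.2 hμc] with x hx
    exact hasDerivAt_max_sub_smul f hx
  rw [← integral_indicator measurableSet_Ioi, ← integral_neg]
  exact (hasDerivAt_integral_of_dominated_loc_of_lip Filter.univ_mem (.of_forall hmeas) hexcess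
    (hf.indicator measurableSet_Ioi).neg.aestronglyMeasurable (.of_forall hlip) hf.norm hderiv).2

theorem hasDerivAt_intervalIntegral_max_sub_smul (hf : IntervalIntegrable f μ a b)
    (hc : c ∈ Icc a b) (hμc : μ {c} = 0) :
    HasDerivAt (fun c => ∫ x in a..b, max (x - c) 0 • f x ∂μ) (-∫ x in c..b, f x ∂μ) c := by
  have hab : a ≤ b := hc.1.trans hc.2
  have hexcess : IntervalIntegrable (fun x => max (x - c) 0 • f x) μ a b :=
    hf.continuousOn_smul (by fun_prop)
  have hIoi : Ioi c ∩ Ioc a b = Ioc c b := by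
    rw [inter_comm, Ioc_inter_Ioi, max_eq_right hc.1]
  have hderiv := hasDerivAt_integral_max_sub_smul hf.1 hexcess.1
    (Measure.absolutelyContinuous_of_le Measure.restrict_le_self hμc)
  rw [Measure.restrict_restrict measurableSet_Ioi, hIoi] at hderiv
  simpa only [intervalIntegral.integral_of_le hab, intervalIntegral.integral_of_le hc.2]
    using hderiv

end ExpectedExcess

theorem demand_response_profit_deriv_general
    {f F : ℝ → ℝ} {dmax s lf α : ℝ}
    (hf_int : (∫ x in (0 : ℝ)..dmax, f x) = 1)
    (hF : ∀ x, F x = ∫ t in (0 : ℝ)..x, f t)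
    (hα : 0 < α)
    {PiDR : ℝ → ℝ}
    (hPiDR : ∀ r, PiDR r = (lf - s) * (∫ x in (0 : ℝ)..dmax, max (x - α * r) 0 * f x) - r)
    {r : ℝ} (hr : r ∈ Icc 0 (dmax / α)) :
    HasDerivAt PiDR (α * (s - lf) * (1 - F (α * r)) - 1) r := by
  have hc : α * r ∈ Icc 0 dmax := ⟨mul_nonneg hα.le hr.1, (le_div_iff₀' hα).1 hr.2⟩
  have hf : IntervalIntegrable f volume 0 dmax :=
    intervalIntegral.intervalIntegrable_of_integral_ne_zero (by simp [hf_int])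
  have htail : ∫ x in (α * r)..dmax, f x = 1 - F (α * r) := by
    have hf_left : IntervalIntegrable f volume 0 (α * r) :=
      hf.mono_set (uIcc_subset_uIcc_left (Icc_subset_uIcc hc))
    rw [hF, ← hf_int, intervalIntegral.integral_interval_sub_left hf hf_left]
  have hshift : HasDerivAt (fun r => α * r) α r := hasDerivAt_const_mul α
  have hexcess :=
    (hasDerivAt_intervalIntegral_max_sub_smul hf hc Real.volume_singleton).comp r hshift
  rw [htail] at hexcess
  rw [funext hPiDR]
  exact ((hexcess.const_mul (lf - s)).fun_sub (hasDerivAt_id' r)).congr_deriv (by ring)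

/-- Derivative of the Demand Response expected profit. -/
theorem demand_response_profit_deriv
    (f F : ℝ → ℝ) (dmax μ s lf α : ℝ)
    (hdmax : 0 < dmax)
    (hf_cont : Continuous f)
    (hf_supp : ∀ x, x < 0 ∨ dmax < x → f x = 0)
    (hf_pos : ∀ x ∈ Set.Ioo 0 dmax, 0 < f x)
    (hf_int : (∫ x in (0:ℝ)..dmax, f x) = 1)
    (hF : ∀ x, F x = ∫ t in (0:ℝ)..x, f t)
    (hμ : μ = ∫ x in (0:ℝ)..dmax, x * f x)
    (hs : 0 < s) (hlf : 0 ≤ lf)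
    (hα : 0 < α)
    (hspread : s > lf)
    (PiDR : ℝ → ℝ)
    (hPiDR : ∀ r, PiDR r = (lf - s) * (∫ x in (0:ℝ)..dmax, max (x - α * r) 0 * f x) - r) :
    ∀ r ∈ Set.Ioo 0 (dmax / α),
      HasDerivAt PiDR (α * (s - lf) * (1 - F (α * r)) - 1) r := by
  intro r hr
  exact demand_response_profit_deriv_general hf_int hF hα hPiDR (Ioo_subset_Icc_self hr)
end

section
/- Let h: [0,∞) → [0,∞) be nondecreasing, concave, and continuous with h(0) = 0, and assume s ≥ λ_f. Then the function r ↦ (λ_f − s)·∫_0^{d_max} max(x − h(r), 0)·f(x) dx − r is concave on [0,∞). -/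
/-!
For each demand level `x` the residual demand `max (x - h r) 0` is convex in `r`, being the maximum
of the convex functions `x - h r` and `0`. Averaging against a nonnegative density preserves
convexity, multiplying by `lf - s ≤ 0` turns it into concavity, and subtracting `r` preserves that.
-/

open MeasureTheory Set

section ExpectedResidual

variable {E Ω : Type*} [AddCommMonoid E] [Module ℝ E] {S : Set E} {h : E → ℝ}
  [MeasurableSpace Ω] {ν : Measure Ω} {X w : Ω → ℝ}

theorem convexOn_max_sub (hh : ConcaveOn ℝ S h) (x : ℝ) :
    ConvexOn ℝ S fun r => max (x - h r) 0 :=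
  ((convexOn_const x hh.1).sub hh).sup (convexOn_const 0 hh.1)

theorem integrable_max_sub_mul (hw : Integrable w ν)
    (hXw : Integrable (fun ω => X ω * w ω) ν) (hw_nonneg : 0 ≤ᵐ[ν] w) (c : ℝ) :
    Integrable (fun ω => max (X ω - c) 0 * w ω) ν := by
  refine (hXw.sub (hw.const_mul c)).pos_part.congr ?_
  filter_upwards [hw_nonneg] with ω hω
  rw [max_mul_of_nonneg _ _ hω, sub_mul, zero_mul, Pi.sub_apply]

theorem convexOn_integral_max_sub_mul (hw : Integrable w ν)
    (hXw : Integrable (fun ω => X ω * w ω) ν) (hw_nonneg : 0 ≤ᵐ[ν] w) (hh : ConcaveOn ℝ S h) :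
    ConvexOn ℝ S fun r => ∫ ω, max (X ω - h r) 0 * w ω ∂ν := by
  refine integral_convexOn_of_integrand_ae hh.1 ?_ fun r _ =>
    integrable_max_sub_mul hw hXw hw_nonneg (h r)
  filter_upwards [hw_nonneg] with ω hω
  simpa only [smul_eq_mul, mul_comm] using (convexOn_max_sub hh (X ω)).smul hω

end ExpectedResidual

theorem demand_response_profit_concave_general {ν : Measure ℝ} {f h : ℝ → ℝ} {S : Set ℝ} {s lf : ℝ}
    (hf : Integrable f ν) (hf_mean : Integrable (fun x => x * f x) ν) (hf_nonneg : 0 ≤ᵐ[ν] f)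
    (hh : ConcaveOn ℝ S h) (hspread : lf ≤ s) :
    ConcaveOn ℝ S fun r => (lf - s) * (∫ x, max (x - h r) 0 * f x ∂ν) - r := by
  have hresidual := convexOn_integral_max_sub_mul hf hf_mean hf_nonneg hh
  have hcost : ConvexOn ℝ S fun r => (s - lf) * ∫ x, max (x - h r) 0 * f x ∂ν :=
    hresidual.smul (sub_nonneg.2 hspread)
  refine (hcost.neg.sub (convexOn_id hh.1)).congr fun r _ => ?_
  simp only [Pi.sub_apply, Pi.neg_apply, id_eq]
  ring

/-- Concavity of the Demand Response expected profit for a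
general nondecreasing concave continuous reduction function h with h(0)=0. -/
theorem demand_response_profit_concave
    (f h : ℝ → ℝ) (dmax μ s lf : ℝ)
    (hdmax : 0 < dmax)
    (hf_cont : Continuous f)
    (hf_supp : ∀ x, x < 0 ∨ dmax < x → f x = 0)
    (hf_pos : ∀ x ∈ Set.Ioo 0 dmax, 0 < f x)
    (hf_int : (∫ x in (0:ℝ)..dmax, f x) = 1)
    (hμ : μ = ∫ x in (0:ℝ)..dmax, x * f x)
    (hs : 0 < s) (hlf : 0 ≤ lf)
    (hh_nonneg : ∀ r, 0 ≤ r → 0 ≤ h r)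
    (hh_mono : MonotoneOn h (Set.Ici 0))
    (hh_concave : ConcaveOn ℝ (Set.Ici 0) h)
    (hh_cont : ContinuousOn h (Set.Ici 0))
    (hh_zero : h 0 = 0)
    (hspread : s ≥ lf) :
    ConcaveOn ℝ (Set.Ici 0)
      (fun r => (lf - s) * (∫ x in (0:ℝ)..dmax, max (x - h r) 0 * f x) - r) := by
  simp only [intervalIntegral.integral_of_le hdmax.le, integral_Ioc_eq_integral_Ioo]
  exact demand_response_profit_concave_general
    (hf_cont.integrableOn_Icc.mono_set Ioo_subset_Icc_self)
    ((continuous_id.mul hf_cont).integrableOn_Icc.mono_set Ioo_subset_Icc_self)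
    (ae_restrict_of_forall_mem measurableSet_Ioo fun x hx => (hf_pos x hx).le) hh_concave hspread
end

section
/- Assume the demand is uniformly distributed on [d_min, d_max], 0 < λ̄_F < s, and set a_F = 1 − λ̄_F/s. Then the optimal expected forward-contract profit satisfies λ_f·μ − s·∫_{F⁻¹(a_F)}^{d_max} x·f(x) dx = λ_f·μ − λ̄_F·d_min − √3·s·(1 − a_F²)·σ; in particular it decreases linearly in the standard deviation σ. -/
/-!
The mass above the quantile `q = F⁻¹(a)` is `1 - a`, and a constant density on `[q, d_max]` places
its centre at the midpoint, so the tail integral is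
`(1 - a) * (q + d_max) / 2 = (1 - a) * d_min + (1 - a ^ 2) * (d_max - d_min) / 2`.
At `a = a_F` one has `s * (1 - a) = λ̄_F`, and `(d_max - d_min) / 2 = √3 * σ`.
-/

open MeasureTheory Set

theorem integral_id_mul_of_eqOn_const {f : ℝ → ℝ} {a b c : ℝ}
    (hf : EqOn f (fun _ ↦ c) (uIcc a b)) :
    ∫ x in a..b, x * f x = c * (b - a) * ((a + b) / 2) := by
  calc ∫ x in a..b, x * f x
      = ∫ x in a..b, x * c :=
        intervalIntegral.integral_congr fun x hx ↦ congrArg (x * ·) (hf hx)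
    _ = (b ^ 2 - a ^ 2) / 2 * c := by
        rw [intervalIntegral.integral_mul_const, integral_id]
    _ = c * (b - a) * ((a + b) / 2) := by ring

theorem integral_id_mul_uniform_density_above_quantile {f : ℝ → ℝ} {l u a : ℝ} (hlu : l < u)
    (hf : ∀ x ∈ Icc l u, f x = 1 / (u - l)) (ha : a ∈ Icc (0 : ℝ) 1) :
    ∫ x in (l + (u - l) * a)..u, x * f x = (1 - a) * l + (1 - a ^ 2) * ((u - l) / 2) := by
  have hl : l ∈ Icc l u := left_mem_Icc.2 hlu.le
  have hu : u ∈ Icc l u := right_mem_Icc.2 hlu.le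
  have hq : l + (u - l) * a ∈ Icc l u := by
    simpa only [smul_eq_mul, mul_comm] using (convex_Icc l u).add_smul_sub_mem hl hu ha
  have h_mass : 1 / (u - l) * (u - (l + (u - l) * a)) = 1 - a := by
    have h_width : u - l ≠ 0 := (sub_pos.2 hlu).ne'
    field_simp
    ring
  rw [integral_id_mul_of_eqOn_const fun x hx ↦ hf x (uIcc_subset_Icc hq hu hx), h_mass]
  ring

theorem forward_profit_dispersion_uniform_general
    {f Finv : ℝ → ℝ} {dmin dmax σ s lF aF : ℝ} (lf : ℝ)
    (hdd : dmin < dmax)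
    (hf : ∀ x ∈ Icc dmin dmax, f x = 1 / (dmax - dmin))
    (hFinv : ∀ a, Finv a = dmin + (dmax - dmin) * a)
    (hσ : σ = (dmax - dmin) / (2 * √3))
    (hs : 0 < s) (hlF_nonneg : 0 ≤ lF) (hlF_le : lF ≤ s)
    (haF : aF = 1 - lF / s) :
    lf * ((dmin + dmax) / 2) - s * (∫ x in (Finv aF)..dmax, x * f x)
      = lf * ((dmin + dmax) / 2) - lF * dmin - √3 * s * (1 - aF ^ 2) * σ := by
  have haF_mem : aF ∈ Icc (0 : ℝ) 1 :=
    haF ▸ Icc.one_sub_mem (unitInterval.div_mem hlF_nonneg hs.le hlF_le)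
  have h_price : s * (1 - aF) = lF := by
    rw [haF, sub_sub_cancel, mul_div_cancel₀ lF hs.ne']
  have h_half_width : (dmax - dmin) / 2 = √3 * σ := by
    rw [hσ]
    field_simp
  rw [hFinv, integral_id_mul_uniform_density_above_quantile hdd hf haF_mem, h_half_width]
  linear_combination -dmin * h_price

/-- Dispersion form of the optimal forward-contract profit for
uniformly distributed demand. -/
theorem forward_profit_dispersion_uniform
    (f Finv : ℝ → ℝ) (dmin dmax μ σ s lf lF : ℝ)
    (hdmin : 0 ≤ dmin) (hdd : dmin < dmax)
    (hf : ∀ x ∈ Set.Icc dmin dmax, f x = 1 / (dmax - dmin))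
    (hFinv : ∀ a, Finv a = dmin + (dmax - dmin) * a)
    (hμ : μ = (dmin + dmax) / 2)
    (hσ : σ = (dmax - dmin) / (2 * Real.sqrt 3))
    (hs : 0 < s) (hlf : 0 ≤ lf)
    (hlF_pos : 0 < lF) (hlF_lt : lF < s)
    (aF : ℝ) (haF : aF = 1 - lF / s) :
    lf * μ - s * (∫ x in (Finv aF)..dmax, x * f x)
      = lf * μ - lF * dmin - Real.sqrt 3 * s * (1 - aF ^ 2) * σ := by
  subst hμ
  exact forward_profit_dispersion_uniform_general lf hdd hf hFinv hσ hs hlF_pos.le hlF_lt.le haF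
end

section
/- Assume the demand is uniformly distributed on [d_min, d_max], 0 ≤ K < s and 0 < P < s − K, and set a_C = 1 − P/(s − K). Then the optimal expected call-option profit satisfies (λ_f − K)·μ − (s − K)·∫_{F⁻¹(a_C)}^{d_max} x·f(x) dx = (λ_f − K)·μ − P·d_min − √3·(s − K)·(1 − a_C²)·σ; in particular it decreases linearly in the standard deviation σ. -/
/-!
The quantile function of the uniform distribution on `[a, b]` is `AffineMap.lineMap a b`. The
substitution `x = F⁻¹(u)` turns `f(x) dx` into `du`, so the partial expectation of the demand above
the quantile of level `p` is `∫ u in p..1, F⁻¹(u) = a * (1 - p) + (b - a) / 2 * (1 - p ^ 2)`. At the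
critical ratio `p = aC` one has `(s - K) * (1 - aC) = P`, and half the range of the demand is
`√3 * σ`.
-/

open MeasureTheory Set

section UniformDensity

variable {E : Type*} [NormedAddCommGroup E] [NormedSpace ℝ E] {a b p q : ℝ} {f : ℝ → ℝ}

theorem integral_lineMap [CompleteSpace E] (v w : E) (p q : ℝ) :
    ∫ u in p..q, AffineMap.lineMap v w u
      = (q - p) • v + ((q ^ 2 - p ^ 2) / 2) • (w - v) := by
  simp only [AffineMap.lineMap_apply_module']
  rw [intervalIntegral.integral_add (Continuous.intervalIntegrable (by fun_prop) p q)
      intervalIntegrable_const,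
    intervalIntegral.integral_smul_const, integral_id, intervalIntegral.integral_const, add_comm]

theorem integral_uniform_density_smul_lineMap
    (hab : a < b) (hf : ∀ x ∈ Icc a b, f x = 1 / (b - a))
    (hp : p ∈ Icc (0 : ℝ) 1) (hq : q ∈ Icc (0 : ℝ) 1) (g : ℝ → E) :
    ∫ x in AffineMap.lineMap a b p..AffineMap.lineMap a b q, f x • g x
      = ∫ u in p..q, g (AffineMap.lineMap a b u) := by
  have density_mul_range : ∀ u ∈ uIcc p q, (b - a) * f (AffineMap.lineMap a b u) = 1 := by
    intro u hu
    have quantile_mem : AffineMap.lineMap a b u ∈ Icc a b :=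
      (convex_Icc a b).lineMap_mem (left_mem_Icc.2 hab.le) (right_mem_Icc.2 hab.le)
        (uIcc_subset_Icc hp hq hu)
    rw [hf _ quantile_mem, mul_one_div_cancel (sub_pos.2 hab).ne']
  calc
    ∫ x in AffineMap.lineMap a b p..AffineMap.lineMap a b q, f x • g x
      = (b - a) • ∫ u in p..q,
          f (AffineMap.lineMap a b u) • g (AffineMap.lineMap a b u) := by
        simp only [AffineMap.lineMap_apply_ring', mul_comm _ (b - a)]
        exact (intervalIntegral.smul_integral_comp_mul_add (fun x => f x • g x) _ _).symm
    _ = ∫ u in p..q,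
          (b - a) • f (AffineMap.lineMap a b u) • g (AffineMap.lineMap a b u) :=
        (intervalIntegral.integral_smul _ _).symm
    _ = ∫ u in p..q, g (AffineMap.lineMap a b u) :=
        intervalIntegral.integral_congr fun u hu => by
          simp only [smul_smul, density_mul_range u hu, one_smul]

theorem integral_id_mul_uniform_density_lineMap_right
    (hab : a < b) (hf : ∀ x ∈ Icc a b, f x = 1 / (b - a)) (hp : p ∈ Icc (0 : ℝ) 1) :
    ∫ x in AffineMap.lineMap a b p..b, x * f x
      = a * (1 - p) + (b - a) / 2 * (1 - p ^ 2) := by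
  have change_of_variables :=
    integral_uniform_density_smul_lineMap hab hf hp (right_mem_Icc.2 zero_le_one) id
  simp only [AffineMap.lineMap_apply_one, smul_eq_mul, id, mul_comm (f _), integral_lineMap]
    at change_of_variables
  rw [change_of_variables]
  ring

end UniformDensity

/-- Dispersion form of the optimal call-option profit for
uniformly distributed demand. -/
theorem call_profit_dispersion_uniform
    (f Finv : ℝ → ℝ) (dmin dmax μ σ s lf P K : ℝ)
    (hdmin : 0 ≤ dmin) (hdd : dmin < dmax)
    (hf : ∀ x ∈ Set.Icc dmin dmax, f x = 1 / (dmax - dmin))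
    (hFinv : ∀ a, Finv a = dmin + (dmax - dmin) * a)
    (hμ : μ = (dmin + dmax) / 2)
    (hσ : σ = (dmax - dmin) / (2 * Real.sqrt 3))
    (hs : 0 < s) (hlf : 0 ≤ lf)
    (hK_nonneg : 0 ≤ K) (hK_lt : K < s)
    (hP_pos : 0 < P) (hP_lt : P < s - K)
    (aC : ℝ) (haC : aC = 1 - P / (s - K)) :
    (lf - K) * μ - (s - K) * (∫ x in (Finv aC)..dmax, x * f x)
      = (lf - K) * μ - P * dmin - Real.sqrt 3 * (s - K) * (1 - aC ^ 2) * σ := by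
  have margin_pos : 0 < s - K := sub_pos.2 hK_lt
  have ratio_mem : aC ∈ Icc (0 : ℝ) 1 :=
    haC ▸ Icc.mem_iff_one_sub_mem.1
      (unitInterval.div_mem hP_pos.le margin_pos.le hP_lt.le)
  have premium_eq : (s - K) * (1 - aC) = P := by
    rw [haC, sub_sub_cancel, mul_div_cancel₀ _ margin_pos.ne']
  have half_range_eq : Real.sqrt 3 * σ = (dmax - dmin) / 2 := by
    rw [hσ]
    field_simp
  have quantile_eq : Finv aC = AffineMap.lineMap dmin dmax aC := by
    rw [hFinv, AffineMap.lineMap_apply_ring']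
    ring
  rw [quantile_eq, integral_id_mul_uniform_density_lineMap_right hdd hf ratio_mem, ← half_range_eq]
  linear_combination -dmin * premium_eq
end

section
/- Assume s > λ_f ≥ 0, 0 < λ̄_F < s, 0 < λ̄_C < 2s, and 0 < P < L where L = s − λ̄_C + λ̄_C²/(4s). If λ̄_F ≤ s − (s − λ̄_C + λ̄_C²/(4s) − P)/√(1 − (λ̄_C − λ̄_C²/(4s))/s), then the forward contract is preferred over the call option: max_{q ∈ [0, d_max]} Π_F(q) ≥ max_{q ∈ [0, d_max]} Π_C(q). -/
open MeasureTheory Set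

/-!
Let `cov q = 𝔼[min(D, q)] = q - q² / (2 d)` be the demand expected to be covered by a volume `q`.
Both contracts trade coverage against cost: up to the same additive constant, the forward earns
`s * cov q - lF * q` and the call `(s - K) * cov q - P * q`. The loss `q² / (2 d)` in `cov` is
homogeneous of degree two, so scaling the volume by `r = √(1 - K / s) ≤ 1` gives the forward the
quadratic term of the call. The price condition says `s - K - P ≤ r * (s - lF)`, so the forward of
volume `r * q` earns at least as much as the call of volume `q`.
-/

/-- The demand `𝔼[min(D, q)]` that a volume `q ∈ [0, d]` is expected to cover when the demand `D` is
uniform on `[0, d]`, in closed form. -/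
noncomputable def uniformCoverage (d q : ℝ) : ℝ := q - q ^ 2 / (2 * d)

lemma integral_sub_mul_of_eq_const {f : ℝ → ℝ} {a b c : ℝ} (p : ℝ)
    (hf : ∀ x ∈ uIcc a b, f x = c) :
    ∫ x in a..b, (x - p) * f x = ((b - p) ^ 2 - (a - p) ^ 2) / 2 * c := by
  have hcongr : ∫ x in a..b, (x - p) * f x = ∫ x in a..b, (x - p) * c :=
    intervalIntegral.integral_congr fun x hx ↦ by simp only [hf x hx]
  rw [hcongr, intervalIntegral.integral_mul_const,
    intervalIntegral.integral_comp_sub_right (fun x ↦ x), integral_id]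

section UniformDemand

variable {f : ℝ → ℝ} {d q : ℝ}

lemma integral_excess_eq_sub_uniformCoverage (hd : 0 < d) (hf : ∀ x ∈ Icc 0 d, f x = 1 / d)
    (hq : q ∈ Icc 0 d) :
    ∫ x in q..d, (x - q) * f x = d / 2 - uniformCoverage d q := by
  have hf' : ∀ x ∈ uIcc q d, f x = 1 / d := fun x hx ↦
    hf x (uIcc_subset_Icc hq (right_mem_Icc.2 hd.le) hx)
  rw [integral_sub_mul_of_eq_const q hf', uniformCoverage]
  field_simp
  ring

lemma integral_add_tail_eq_uniformCoverage (hd : 0 < d) (hf : ∀ x ∈ Icc 0 d, f x = 1 / d)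
    (hq : q ∈ Icc 0 d) :
    (∫ x in (0 : ℝ)..q, x * f x) + q * (1 - q / d) = uniformCoverage d q := by
  have hf' : ∀ x ∈ uIcc 0 q, f x = 1 / d := fun x hx ↦
    hf x (uIcc_subset_Icc (left_mem_Icc.2 hd.le) hq hx)
  have hint := integral_sub_mul_of_eq_const 0 hf'
  simp only [sub_zero] at hint
  rw [hint, uniformCoverage]
  field_simp
  ring

end UniformDemand

lemma continuous_uniformCoverage (d : ℝ) : Continuous (uniformCoverage d) := by
  unfold uniformCoverage
  fun_prop

lemma mul_uniformCoverage_sub_le_of_scaling {s m r p p' q : ℝ} (d : ℝ) (hm : s * r ^ 2 = m)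
    (hmargin : m - p ≤ r * (s - p')) (hq : 0 ≤ q) :
    m * uniformCoverage d q - p * q ≤ s * uniformCoverage d (r * q) - p' * (r * q) := by
  have hgain : s * uniformCoverage d (r * q) - p' * (r * q)
      - (m * uniformCoverage d q - p * q) = (r * (s - p') - (m - p)) * q := by
    rw [uniformCoverage, uniformCoverage, ← hm]
    ring
  have hnonneg : 0 ≤ (r * (s - p') - (m - p)) * q := mul_nonneg (sub_nonneg.2 hmargin) hq
  linarith

lemma exists_forward_volume_ge_call {d s K lF P q : ℝ} (hs : 0 < s) (hK_nonneg : 0 ≤ K)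
    (hK_lt : K < s) (hcond : lF ≤ s - (s - K - P) / √(1 - K / s)) (hq : q ∈ Icc 0 d) :
    ∃ q' ∈ Icc 0 d,
      (s - K) * uniformCoverage d q - P * q ≤ s * uniformCoverage d q' - lF * q' := by
  have hratio : 0 < 1 - K / s := sub_pos.2 ((div_lt_one hs).2 hK_lt)
  have hr_le : √(1 - K / s) ≤ 1 := Real.sqrt_le_one.2 (sub_le_self 1 (by positivity))
  have hsq : s * √(1 - K / s) ^ 2 = s - K := by
    rw [Real.sq_sqrt hratio.le]
    field_simp
  have hmargin : s - K - P ≤ √(1 - K / s) * (s - lF) :=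
    (div_le_iff₀' (Real.sqrt_pos.2 hratio)).1 (le_sub_comm.1 hcond)
  exact ⟨√(1 - K / s) * q,
    ⟨mul_nonneg (Real.sqrt_nonneg _) hq.1, (mul_le_of_le_one_left hq.1 hr_le).trans hq.2⟩,
    mul_uniformCoverage_sub_le_of_scaling d hsq hmargin hq.1⟩

lemma uniform_exerciseCost_nonneg {s l : ℝ} (hs : 0 < s) (hl_nonneg : 0 ≤ l) (hl_le : l ≤ 4 * s) :
    0 ≤ l - l ^ 2 / (4 * s) := by
  rw [sub_nonneg, div_le_iff₀ (by positivity), sq]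
  gcongr

/-- Here `R` is the expected retail revenue, and `K` the expected exercise cost per unit for an
arbitrary distribution of the spot price with mean `s`. -/
theorem forward_preferred_over_call_general {f : ℝ → ℝ} {dmax s lF P K R : ℝ}
    (hdmax : 0 < dmax) (hf : ∀ x ∈ Icc 0 dmax, f x = 1 / dmax)
    (hs : 0 < s) (hK_nonneg : 0 ≤ K) (hK_lt : K < s) {PiF PiC : ℝ → ℝ}
    (hPiF : ∀ q, PiF q = R - lF * q - s * ∫ x in q..dmax, (x - q) * f x)
    (hPiC : ∀ q, PiC q = R - P * q - s * (∫ x in q..dmax, (x - q) * f x)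
      - K * ((∫ x in (0 : ℝ)..q, x * f x) + q * (1 - q / dmax)))
    (hcond : lF ≤ s - (s - K - P) / √(1 - K / s)) :
    sSup (PiF '' Icc 0 dmax) ≥ sSup (PiC '' Icc 0 dmax) := by
  have hF : EqOn PiF (fun q ↦ R - s * (dmax / 2) + (s * uniformCoverage dmax q - lF * q))
      (Icc 0 dmax) := fun q hq ↦ by
    rw [hPiF, integral_excess_eq_sub_uniformCoverage hdmax hf hq]
    ring
  have hC : EqOn PiC (fun q ↦ R - s * (dmax / 2) + ((s - K) * uniformCoverage dmax q - P * q))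
      (Icc 0 dmax) := fun q hq ↦ by
    rw [hPiC, integral_excess_eq_sub_uniformCoverage hdmax hf hq,
      integral_add_tail_eq_uniformCoverage hdmax hf hq]
    ring
  have hbdd : BddAbove (PiF '' Icc 0 dmax) := by
    have hcov := continuous_uniformCoverage dmax
    rw [hF.image_eq]
    exact isCompact_Icc.bddAbove_image (by fun_prop)
  refine csSup_le ((nonempty_Icc.2 hdmax.le).image _) (forall_mem_image.2 fun q hq ↦ ?_)
  obtain ⟨q', hq', hle⟩ := exists_forward_volume_ge_call hs hK_nonneg hK_lt hcond hq
  refine le_csSup_of_le hbdd (mem_image_of_mem PiF hq') ?_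
  simpa only [hC hq, hF hq', add_le_add_iff_left] using hle

/-- Condition under which the forward contract is preferred over
the call option (uniform demand on [0,d_max], uniform spot price on [0,2s]). -/
theorem forward_preferred_over_call
    (f : ℝ → ℝ) (dmax s lf lF lC P K L μ : ℝ)
    (hdmax : 0 < dmax)
    (hf : ∀ x ∈ Set.Icc (0:ℝ) dmax, f x = 1 / dmax)
    (hμ : μ = dmax / 2)
    (hs : 0 < s) (hlf : 0 ≤ lf) (hspread : s > lf)
    (hlF_pos : 0 < lF) (hlF_lt : lF < s)
    (hlC_pos : 0 < lC) (hlC_lt : lC < 2 * s)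
    (hK : K = lC - lC ^ 2 / (4 * s))
    (hL : L = s - lC + lC ^ 2 / (4 * s))
    (hP_pos : 0 < P) (hP_lt : P < L)
    (PiF PiC : ℝ → ℝ)
    (hPiF : ∀ q, PiF q = lf * μ - lF * q - s * ∫ x in q..dmax, (x - q) * f x)
    (hPiC : ∀ q, PiC q = lf * μ - P * q - s * (∫ x in q..dmax, (x - q) * f x)
      - K * ((∫ x in (0:ℝ)..q, x * f x) + q * (1 - q / dmax)))
    (hcond : lF ≤ s - (s - lC + lC ^ 2 / (4 * s) - P)
      / Real.sqrt (1 - (lC - lC ^ 2 / (4 * s)) / s)) :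
    sSup (PiF '' Set.Icc 0 dmax) ≥ sSup (PiC '' Set.Icc 0 dmax) := by
  subst hK
  rw [sub_add] at hL hcond
  exact forward_preferred_over_call_general hdmax hf hs
    (uniform_exerciseCost_nonneg hs hlC_pos.le (by linarith)) (by linarith) hPiF hPiC hcond
end

section
/- Assume s > λ_f ≥ 0, 0 < λ̄_C < 2s, α > 0, and 0 < P < L where L = s − λ̄_C + λ̄_C²/(4s). If 1/α ≤ (s − λ_f)·[1 − √(L/(s − λ_f))·(1 − P/L)], then Demand Response is preferred over the call option: sup_{r ≥ 0} Π_DR(r) ≥ max_{q ∈ [0, d_max]} Π_C(q). -/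
open MeasureTheory Set

/-!
Both instruments shave demand: the option covers `min d q`, the reward removes `min d (α * r)`.
Since `E[min d x] = x - x² / (2 * dmax)`, each profit is the common constant
`-(s - lf) * dmax / 2` plus the net saving `a * E[min d x] - p * x`, with unit value and unit price
`(a, p) = (s - K, P)` for the option and `(a, p) = (s - lf, 1 / α)` for Demand Response. Over
`x ≥ 0` this concave quadratic has maximum `dmax / 2 * (max (a - p) 0)² / a`, so instruments are
ranked by `(a - p) / √a`, and the condition on `1 / α` compares these two quantities.
-/

lemma integral_mul_of_eqOn_const {f : ℝ → ℝ} {a b c : ℝ} (g : ℝ → ℝ)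
    (hf : EqOn f (fun _ ↦ c) (uIcc a b)) :
    ∫ x in a..b, g x * f x = (∫ x in a..b, g x) * c := by
  rw [← intervalIntegral.integral_mul_const]
  exact intervalIntegral.integral_congr fun x hx ↦ congrArg (g x * ·) (hf hx)

lemma integral_sub_left_endpoint (t b : ℝ) : ∫ x in t..b, (x - t) = (b - t) ^ 2 / 2 := by
  simp [intervalIntegral.integral_comp_sub_right (fun x ↦ x) t]

lemma integral_max_sub_zero {a t b : ℝ} (hat : a ≤ t) (htb : t ≤ b) :
    ∫ x in a..b, max (x - t) 0 = (b - t) ^ 2 / 2 := by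
  have hcont : Continuous fun x : ℝ ↦ max (x - t) 0 := by fun_prop
  have below : ∫ x in a..t, max (x - t) 0 = ∫ _ in a..t, (0 : ℝ) :=
    intervalIntegral.integral_congr fun x hx ↦
      max_eq_right (sub_nonpos.2 (uIcc_of_le hat ▸ hx).2)
  have above : ∫ x in t..b, max (x - t) 0 = ∫ x in t..b, (x - t) :=
    intervalIntegral.integral_congr fun x hx ↦
      max_eq_left (sub_nonneg.2 (uIcc_of_le htb ▸ hx).1)
  rw [← intervalIntegral.integral_add_adjacent_intervals
    (hcont.intervalIntegrable a t) (hcont.intervalIntegrable t b), below, above,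
    intervalIntegral.integral_zero, zero_add, integral_sub_left_endpoint]

lemma sq_max_zero_div {c : ℝ} (hc : 0 ≤ c) (v : ℝ) : max v 0 ^ 2 / c = max (v / √c) 0 ^ 2 := by
  rw [← Real.sq_sqrt hc, ← div_pow, Real.sqrt_sq (Real.sqrt_nonneg c),
    ← max_div_div_right (Real.sqrt_nonneg c), zero_div]

/-- Expected net saving from shaving up to `x` units off a demand uniform on `[0, D]`, when each
unit shaved is worth `a` and each unit of capacity `x` costs `p`. The factor `x - x ^ 2 / (2 * D)`
is `E[min d x]` for `0 ≤ x ≤ D`. -/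
noncomputable def netSaving (D a p x : ℝ) : ℝ := a * (x - x ^ 2 / (2 * D)) - p * x

/-- The capacity `x ≥ 0` that maximises `netSaving D a p`. -/
noncomputable def optimalCapacity (D a p : ℝ) : ℝ := D * max (a - p) 0 / a

section NetSaving

variable {D a p x : ℝ}

lemma optimalCapacity_mem_Icc (hD : 0 ≤ D) (ha : 0 < a) (hp : 0 ≤ p) :
    optimalCapacity D a p ∈ Icc 0 D := by
  refine ⟨by unfold optimalCapacity; positivity, ?_⟩
  have : max (a - p) 0 ≤ a := max_le (sub_le_self a hp) ha.le
  exact div_le_of_le_mul₀ ha.le hD (mul_le_mul_of_nonneg_left this hD)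

lemma netSaving_optimalCapacity (hD : D ≠ 0) (ha : a ≠ 0) :
    netSaving D a p (optimalCapacity D a p) = D / 2 * (max (a - p) 0 ^ 2 / a) := by
  unfold netSaving optimalCapacity
  rcases max_cases (a - p) 0 with ⟨h, -⟩ | ⟨h, -⟩ <;> rw [h] <;> field_simp <;> ring

lemma netSaving_le (hD : 0 < D) (ha : 0 < a) (hx : 0 ≤ x) :
    netSaving D a p x ≤ D / 2 * (max (a - p) 0 ^ 2 / a) := by
  set m := max (a - p) 0
  have complete_square :
      m * x - a * x ^ 2 / (2 * D) = D / 2 * (m ^ 2 / a) - (a * x - D * m) ^ 2 / (2 * a * D) := by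
    field_simp
    ring
  calc netSaving D a p x = (a - p) * x - a * x ^ 2 / (2 * D) := by unfold netSaving; ring
    _ ≤ m * x - a * x ^ 2 / (2 * D) := by gcongr; exact le_max_left _ _
    _ ≤ D / 2 * (m ^ 2 / a) := by
      rw [complete_square]
      exact sub_le_self _ (by positivity)

lemma netSaving_le_netSaving_optimalCapacity {b q : ℝ} (hD : 0 < D) (ha : 0 < a) (hb : 0 < b)
    (h : (a - p) / √a ≤ (b - q) / √b) (hx : 0 ≤ x) :
    netSaving D a p x ≤ netSaving D b q (optimalCapacity D b q) := by
  rw [netSaving_optimalCapacity hD.ne' hb.ne']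
  refine (netSaving_le hD ha hx).trans ?_
  rw [sq_max_zero_div ha.le, sq_max_zero_div hb.le]
  gcongr

end NetSaving

lemma le_mul_one_sub_sqrt_iff {a b p q : ℝ} (ha : 0 < a) (hb : 0 < b) :
    q ≤ b * (1 - √(a / b) * (1 - p / a)) ↔ (a - p) / √a ≤ (b - q) / √b := by
  have scaled : b * (√(a / b) * (1 - p / a)) = (a - p) / √a * √b := by
    rw [Real.sqrt_div ha.le]
    field_simp
    rw [Real.sq_sqrt ha.le, Real.sq_sqrt hb.le]
  rw [le_div_iff₀ (Real.sqrt_pos.2 hb), ← scaled, mul_sub, mul_one, le_sub_comm]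

/-- Expected profit `Π_C(q)` under a call option of volume `q`, premium `P` and expected unit
exercise cost `K`, for a demand of mean `μ` with density `f` and distribution
function `x / dmax` on `[0, dmax]`. -/
noncomputable def callProfit (f : ℝ → ℝ) (dmax s lf μ P K q : ℝ) : ℝ :=
  lf * μ - P * q - s * (∫ x in q..dmax, (x - q) * f x)
    - K * ((∫ x in (0 : ℝ)..q, x * f x) + q * (1 - q / dmax))

/-- Expected profit `Π_DR(r)` under Demand Response with elasticity `α` and reward `r`, for a
demand on `[0, dmax]` with density `f`. -/
noncomputable def drProfit (f : ℝ → ℝ) (dmax s lf α r : ℝ) : ℝ :=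
  (lf - s) * (∫ x in (0 : ℝ)..dmax, max (x - α * r) 0 * f x) - r

section UniformDemand

variable {f : ℝ → ℝ} {dmax s lf : ℝ}

lemma callProfit_eq_netSaving {P K q : ℝ} (hdmax : 0 < dmax)
    (hf : ∀ x ∈ Icc 0 dmax, f x = 1 / dmax) (hq : q ∈ Icc 0 dmax) :
    callProfit f dmax s lf (dmax / 2) P K q
      = -(s - lf) * (dmax / 2) + netSaving dmax (s - K) P q := by
  have above : EqOn f (fun _ ↦ 1 / dmax) (uIcc q dmax) := fun x hx ↦
    hf x (uIcc_subset_Icc hq (right_mem_Icc.2 hdmax.le) hx)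
  have below : EqOn f (fun _ ↦ 1 / dmax) (uIcc 0 q) := fun x hx ↦
    hf x (uIcc_subset_Icc (left_mem_Icc.2 hdmax.le) hq hx)
  rw [callProfit, integral_mul_of_eqOn_const _ above, integral_mul_of_eqOn_const _ below,
    integral_sub_left_endpoint, integral_id, netSaving]
  field_simp
  ring

lemma drProfit_eq_netSaving {α r : ℝ} (hdmax : 0 < dmax)
    (hf : ∀ x ∈ Icc 0 dmax, f x = 1 / dmax) (hα : α ≠ 0) (hr : α * r ∈ Icc 0 dmax) :
    drProfit f dmax s lf α r
      = -(s - lf) * (dmax / 2) + netSaving dmax (s - lf) (1 / α) (α * r) := by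
  have hf' : EqOn f (fun _ ↦ 1 / dmax) (uIcc 0 dmax) := uIcc_of_le hdmax.le ▸ hf
  rw [drProfit, integral_mul_of_eqOn_const _ hf', integral_max_sub_zero hr.1 hr.2, netSaving]
  field_simp
  ring

lemma drProfit_nonpos {α r : ℝ} (hdmax : 0 ≤ dmax) (hf : ∀ x ∈ Icc 0 dmax, 0 ≤ f x)
    (hspread : lf ≤ s) (hr : 0 ≤ r) : drProfit f dmax s lf α r ≤ 0 := by
  have : 0 ≤ ∫ x in (0 : ℝ)..dmax, max (x - α * r) 0 * f x :=
    intervalIntegral.integral_nonneg hdmax fun x hx ↦ mul_nonneg (le_max_right _ _) (hf x hx)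
  exact sub_nonpos.2 ((mul_nonpos_of_nonpos_of_nonneg (sub_nonpos.2 hspread) this).trans hr)

/-- The spot price enters only through its mean `s` and the expected exercise cost `K`, so its
distribution is arbitrary here. -/
theorem dr_preferred_over_call_general {P K α : ℝ} (hdmax : 0 < dmax)
    (hf : ∀ x ∈ Icc 0 dmax, f x = 1 / dmax) (hspread : lf < s) (hK : K < s) (hα : 0 < α)
    (hcond : 1 / α ≤ (s - lf) * (1 - √((s - K) / (s - lf)) * (1 - P / (s - K)))) :
    sSup (callProfit f dmax s lf (dmax / 2) P K '' Icc 0 dmax)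
      ≤ sSup (drProfit f dmax s lf α '' Ici 0) := by
  have hΔ : 0 < s - lf := sub_pos.2 hspread
  have hL : 0 < s - K := sub_pos.2 hK
  set t := optimalCapacity dmax (s - lf) (1 / α)
  have ht : t ∈ Icc 0 dmax := optimalCapacity_mem_Icc hdmax.le hΔ (by positivity)
  have hαt : α * (t / α) = t := mul_div_cancel₀ t hα.ne'
  have hbdd : BddAbove (drProfit f dmax s lf α '' Ici 0) := by
    refine ⟨0, forall_mem_image.2 fun r hr ↦ drProfit_nonpos hdmax.le ?_ hspread.le hr⟩
    exact fun x hx ↦ hf x hx ▸ by positivity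
  refine csSup_le ((nonempty_Icc.2 hdmax.le).image _) (forall_mem_image.2 fun q hq ↦ ?_)
  calc callProfit f dmax s lf (dmax / 2) P K q
      = -(s - lf) * (dmax / 2) + netSaving dmax (s - K) P q := callProfit_eq_netSaving hdmax hf hq
    _ ≤ -(s - lf) * (dmax / 2) + netSaving dmax (s - lf) (1 / α) t := by
      gcongr
      exact netSaving_le_netSaving_optimalCapacity hdmax hL hΔ
        ((le_mul_one_sub_sqrt_iff hL hΔ).1 hcond) hq.1
    _ = drProfit f dmax s lf α (t / α) := by
      rw [drProfit_eq_netSaving hdmax hf hα.ne' (hαt.symm ▸ ht), hαt]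
    _ ≤ sSup (drProfit f dmax s lf α '' Ici 0) :=
      le_csSup hbdd (mem_image_of_mem _ (div_nonneg ht.1 hα.le))

end UniformDemand

/-- Condition under which Demand Response is preferred over the
call option (uniform demand on [0,d_max], uniform spot price on [0,2s]). -/
theorem dr_preferred_over_call
    (f : ℝ → ℝ) (dmax s lf lC P K L α μ : ℝ)
    (hdmax : 0 < dmax)
    (hf : ∀ x ∈ Set.Icc (0:ℝ) dmax, f x = 1 / dmax)
    (hμ : μ = dmax / 2)
    (hs : 0 < s) (hlf : 0 ≤ lf) (hspread : s > lf)
    (hlC_pos : 0 < lC) (hlC_lt : lC < 2 * s)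
    (hα : 0 < α)
    (hK : K = lC - lC ^ 2 / (4 * s))
    (hL : L = s - lC + lC ^ 2 / (4 * s))
    (hP_pos : 0 < P) (hP_lt : P < L)
    (PiC PiDR : ℝ → ℝ)
    (hPiC : ∀ q, PiC q = lf * μ - P * q - s * (∫ x in q..dmax, (x - q) * f x)
      - K * ((∫ x in (0:ℝ)..q, x * f x) + q * (1 - q / dmax)))
    (hPiDR : ∀ r, PiDR r = (lf - s) * (∫ x in (0:ℝ)..dmax, max (x - α * r) 0 * f x) - r)
    (hcond : 1 / α ≤ (s - lf) * (1 - Real.sqrt (L / (s - lf)) * (1 - P / L))) :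
    sSup (PiDR '' Set.Ici 0) ≥ sSup (PiC '' Set.Icc 0 dmax) := by
  obtain rfl : L = s - K := by rw [hL, hK]; ring
  rw [funext hPiC, funext hPiDR, hμ]
  exact dr_preferred_over_call_general hdmax hf hspread (sub_pos.1 (hP_pos.trans hP_lt)) hα hcond
end
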